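/- arXiv:1306.0107 — 5 statements merged into one kernel-verified Lean document; each statement's English description precedes it below -/
import Mathlib

section
/- Let l and m be trigonometric polynomials (real-valued functions of θ). Assume there exist continuous functions l̃, m̃, w : ℝ → ℝ with w being 2π-periodic (w(θ + 2π) = w(θ) for all θ) such that l(θ) = l̃(w(θ)) and m(θ) = m̃(w(θ)) for all θ ∈ ℝ. Then there exist real polynomials p, q ∈ ℝ[X] and a trigonometric polynomial w₀ such that l(θ) = p(w₀(θ)) and m(θ) = q(w₀(θ)) for all θ ∈ ℝ. -/
/-- A trigonometric polynomial: an element of the ℝ-subalgebra of `ℝ → ℝ`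
generated by `sin` and `cos`. -/
def IsTrigPoly (f : ℝ → ℝ) : Prop :=
  f ∈ Algebra.adjoin ℝ ({Real.sin, Real.cos} : Set (ℝ → ℝ))

/-!
Write trigonometric polynomials as Laurent polynomials in `exp (iθ)`. A continuous function `w` on
`ℝ` that is not injective has a local extremum, hence chords `w (x + δ) = w x` of all small lengths
`δ`. Let `B` be the algebra of the Laurent polynomials over `ℂ` that agree at the two ends of all
but finitely many of these chords; it contains every trigonometric polynomial that factors through
`w`. The ends of different chords have different quotients `exp (iδ)`, so `B` is closed under exact
division and contains no `T ^ n` with `n ≠ 0`; in particular its units are the constants.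

By Lüroth's theorem the field generated by `B` is `ℂ(g)`, and a Möbius transformation makes `g`
integral over the Laurent polynomials, hence an element `φ` of `B`. An element of `B` is a reduced
fraction in `φ`, whose denominator is a unit by Bezout, so `B = ℂ[φ]`. Complex conjugation preserves
`B`, so it maps `φ` to a polynomial in `φ` of degree one, and an affine change of `φ` gives a
generator that is real on the unit circle.
-/

section

open Polynomial IntermediateField Filter
open LaurentPolynomial (T)
open scoped LaurentPolynomial

section IntegralGenerator

lemma isIntegral_inv_of_aeval_eq_zero {R L : Type*} [CommRing R] [Field L] [Algebra R L]
    {p : R[X]} (hp : IsUnit (p.coeff 0)) {x : L} (hx : aeval x p = 0) : IsIntegral R x⁻¹ := by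
  have := (algebraMap R L).domain_nontrivial
  obtain rfl | hx0 := eq_or_ne x 0
  · simpa using isIntegral_zero
  let := invertibleOfNonzero hx0
  have hlead : p.reverse.leadingCoeff = p.coeff 0 := by
    rw [reverse_leadingCoeff, trailingCoeff, natTrailingDegree_eq_zero.2 (.inr hp.ne_zero)]
  have hrev : aeval (⅟x) p.reverse = 0 := (eval₂_reverse_eq_zero_iff _ x p).2 hx
  have hint := (isIntegral_leadingCoeff_smul p.reverse _ hrev).smul (↑hp.unit⁻¹ : R)
  rwa [hlead, smul_smul, hp.val_inv_mul, one_smul, invOf_eq_inv] at hint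

lemma exists_isCoprime_mul_aeval_eq_aeval {k L : Type*} [Field k] [Field L] [Algebra k L]
    {g x : L} (hx : x ∈ k⟮g⟯) :
    ∃ p q : k[X], IsCoprime p q ∧ aeval g q ≠ 0 ∧ x * aeval g q = aeval g p := by
  classical
  obtain ⟨p, q, rfl⟩ := (mem_adjoin_simple_iff k x).1 hx
  obtain hq | hq := eq_or_ne (aeval g q) 0
  · exact ⟨0, 1, isCoprime_zero_left.2 isUnit_one, by simp, by simp [hq]⟩
  have hq0 : q ≠ 0 := fun h => hq (by simp [h])
  obtain ⟨p', q', hp, hq', hpq⟩ :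
      ∃ p' q', p = gcd p q * p' ∧ q = gcd p q * q' ∧ IsCoprime p' q' :=
    ⟨p / gcd p q, q / gcd p q,
      (EuclideanDomain.mul_div_cancel' (gcd_ne_zero_of_right hq0) (gcd_dvd_left p q)).symm,
      (EuclideanDomain.mul_div_cancel' (gcd_ne_zero_of_right hq0) (gcd_dvd_right p q)).symm,
      isCoprime_div_gcd_div_gcd hq0⟩
  rw [hq', map_mul, mul_ne_zero_iff] at hq
  refine ⟨p', q', hpq, hq.2, ?_⟩
  nth_rw 1 [hp]
  nth_rw 2 [hq']
  rw [map_mul, map_mul, mul_div_mul_left _ _ hq.1, div_mul_cancel₀ _ hq.2]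

lemma adjoin_simple_inv_sub_algebraMap {k L : Type*} [Field k] [Field L] [Algebra k L]
    (g : L) (c : k) : k⟮(g - algebraMap k L c)⁻¹⟯ = k⟮g⟯ := by
  apply le_antisymm <;> rw [adjoin_simple_le_iff]
  · exact inv_mem (sub_mem (mem_adjoin_simple_self k g) (_root_.algebraMap_mem _ c))
  · have := add_mem (inv_mem (mem_adjoin_simple_self k (g - algebraMap k L c)⁻¹))
      (_root_.algebraMap_mem k⟮(g - algebraMap k L c)⁻¹⟯ c)
    rwa [inv_inv, sub_add_cancel] at this

variable {k R L : Type*} [Field k] [CommRing R] [Field L] [Algebra k R] [Algebra R L]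
  [Algebra k L] [IsScalarTower k R L]

lemma isIntegral_of_aeval_eq_algebraMap {p : k[X]} (hp : p.natDegree ≠ 0) {g : L} {f : R}
    (hg : aeval g p = algebraMap R L f) : IsIntegral R g := by
  have hp0 : p ≠ 0 := by rintro rfl; exact hp rfl
  have hmonic : ((p * C p.leadingCoeff⁻¹).map (algebraMap k R)).Monic :=
    (monic_mul_leadingCoeff_inv hp0).map _
  have := (algebraMap R L).domain_nontrivial
  refine .of_aeval_monic hmonic ?_ ?_
  · rwa [natDegree_map_eq_of_injective (algebraMap k R).injective,
      natDegree_mul_C (inv_ne_zero (leadingCoeff_ne_zero.2 hp0))]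
  · rw [aeval_map_algebraMap, map_mul, hg, aeval_C, IsScalarTower.algebraMap_apply k R L, ← map_mul]
    exact isIntegral_algebraMap

/- If `f = p(g) / q(g)`, a change of coordinates moves a root of `q`, that is a pole of `f`, to
`g = ∞`. -/
lemma exists_isIntegral_adjoin_simple_eq [IsAlgClosed k] {g : L} {f : R}
    (hf : algebraMap R L f ∈ k⟮g⟯) (hfk : algebraMap R L f ∉ (algebraMap k L).range) :
    ∃ g', IsIntegral R g' ∧ k⟮g'⟯ = k⟮g⟯ := by
  obtain ⟨p, q, hpq, hq, hfpq⟩ := exists_isCoprime_mul_aeval_eq_aeval hf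
  by_cases hdeg : q.degree = 0
  · obtain ⟨c, rfl⟩ : ∃ c, q = C c := ⟨_, eq_C_of_degree_eq_zero hdeg⟩
    rw [aeval_C] at hq hfpq
    refine ⟨g, isIntegral_of_aeval_eq_algebraMap (p := p) (f := f * algebraMap k R c) ?_ ?_, rfl⟩
    · rintro hp
      rw [eq_C_of_natDegree_eq_zero hp, aeval_C] at hfpq
      exact hfk ⟨p.coeff 0 / c, by rw [map_div₀, ← hfpq, mul_div_cancel_right₀ _ hq]⟩
    · rw [← hfpq, map_mul, IsScalarTower.algebraMap_apply k R L]
  · obtain ⟨β, hβ⟩ := IsAlgClosed.exists_root q hdeg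
    rw [IsRoot.def] at hβ
    set F : R[X] := p.map (algebraMap k R) - C f * q.map (algebraMap k R) with hF
    have hFg : aeval g F = 0 := by simp [hF, aeval_map_algebraMap, hfpq]
    refine ⟨(g - algebraMap k L β)⁻¹, ?_, adjoin_simple_inv_sub_algebraMap g β⟩
    refine isIntegral_inv_of_aeval_eq_zero (p := F.comp (X + C (algebraMap k R β))) ?_ ?_
    · have hpβ : p.eval β ≠ 0 := fun hp => by
        obtain ⟨u, v, huv⟩ := hpq
        simpa [hβ, hp] using congrArg (eval β) huv
      have hcoeff : (F.comp (X + C (algebraMap k R β))).coeff 0 = algebraMap k R (p.eval β) := by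
        simp [coeff_zero_eq_eval_zero, hF, eval_map_algebraMap, aeval_algebraMap_apply, hβ]
      exact hcoeff ▸ (isUnit_iff_ne_zero.2 hpβ).map (algebraMap k R)
    · rw [aeval_comp]
      simpa [← IsScalarTower.algebraMap_apply] using hFg

end IntegralGenerator

section Subalgebra

variable {k A L : Type*} [Field k] [CommRing A] [Field L] [Algebra k A] [Algebra A L]
  [Algebra k L] [IsScalarTower k A L] {B : Subalgebra k A}

lemma mem_of_algebraMap_mem_adjoin_map [FaithfulSMul A L]
    (hdiv : ∀ b ∈ B, b ≠ 0 → ∀ e, e * b ∈ B → e ∈ B) {a : A}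
    (ha : algebraMap A L a ∈ adjoin k (B.map (IsScalarTower.toAlgHom k A L) : Set L)) :
    a ∈ B := by
  have hinj := FaithfulSMul.algebraMap_injective A L
  obtain ⟨_, hr, _, hs, hrs⟩ := (mem_adjoin_iff_div).1 ha
  rw [Algebra.adjoin_eq] at hr hs
  obtain ⟨r, hr, rfl⟩ := hr
  obtain ⟨s, hs, rfl⟩ := hs
  simp only [RingHom.coe_coe, IsScalarTower.coe_toAlgHom'] at hrs
  obtain rfl | hs0 := eq_or_ne s 0
  · rw [map_zero, div_zero, map_eq_zero_iff _ hinj] at hrs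
    exact hrs ▸ B.zero_mem
  · rw [eq_div_iff ((map_ne_zero_iff _ hinj).2 hs0), ← map_mul] at hrs
    exact hdiv s hs hs0 a (hinj hrs ▸ hr)

/- By Bezout, the denominator of an element of `B` written as a fraction in `g` is a unit. -/
lemma eq_adjoin_singleton_of_le_adjoin_simple [FaithfulSMul A L]
    (hunit : ∀ b ∈ B, IsUnit b → b ∈ (⊥ : Subalgebra k A)) {g : A} (hg : g ∈ B)
    (hB : ∀ b ∈ B, algebraMap A L b ∈ k⟮algebraMap A L g⟯) : B = Algebra.adjoin k {g} := by
  have hinj := FaithfulSMul.algebraMap_injective A L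
  have hle : Algebra.adjoin k {g} ≤ B := Algebra.adjoin_le (Set.singleton_subset_iff.2 hg)
  refine le_antisymm (fun h hh => ?_) hle
  obtain ⟨p, q, ⟨u, v, huv⟩, hq, hpq⟩ := exists_isCoprime_mul_aeval_eq_aeval (hB h hh)
  simp only [aeval_algebraMap_apply, ← map_mul] at hq hpq
  have hhq : h * aeval g q = aeval g p := hinj hpq
  have hbezout : aeval g q * (aeval g u * h + aeval g v) = 1 := by
    have := congrArg (aeval g) huv
    simp only [map_add, map_mul, map_one] at this
    linear_combination this + aeval g u * hhq
  obtain ⟨c, hc⟩ := Algebra.mem_bot.1 <|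
    hunit _ (hle (aeval_mem_adjoin_singleton k g)) (IsUnit.of_mul_eq_one _ hbezout)
  have hc0 : c ≠ 0 := by rintro rfl; simp [← hc] at hq
  have hh : h = aeval g (C c⁻¹ * p) := by
    rw [map_mul, ← hhq, ← hc, aeval_C, mul_left_comm, ← map_mul, inv_mul_cancel₀ hc0, map_one,
      mul_one]
  exact hh ▸ aeval_mem_adjoin_singleton k g

variable [IsAlgClosed k] [IsFractionRing A L] [IsIntegrallyClosed A]

theorem exists_eq_adjoin_singleton_of_adjoin_map_eq
    (hdiv : ∀ b ∈ B, b ≠ 0 → ∀ e, e * b ∈ B → e ∈ B)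
    (hunit : ∀ b ∈ B, IsUnit b → b ∈ (⊥ : Subalgebra k A)) {g : L}
    (hg : adjoin k (B.map (IsScalarTower.toAlgHom k A L) : Set L) = k⟮g⟯) :
    ∃ φ, B = Algebra.adjoin k {φ} := by
  obtain rfl | hbot := eq_or_ne B ⊥
  · exact ⟨0, by simp⟩
  have hinj := FaithfulSMul.algebraMap_injective A L
  have hB : ∀ b ∈ B, algebraMap A L b ∈ k⟮g⟯ := fun b hb =>
    hg ▸ subset_adjoin _ _ ⟨b, hb, rfl⟩
  obtain ⟨f, hfB, hf⟩ := SetLike.exists_of_lt (bot_lt_iff_ne_bot.2 hbot)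
  have hfk : algebraMap A L f ∉ (algebraMap k L).range := by
    rintro ⟨c, hc⟩
    rw [IsScalarTower.algebraMap_apply k A L] at hc
    exact hf (Algebra.mem_bot.2 ⟨c, hinj hc⟩)
  obtain ⟨g', hint, hg'⟩ := exists_isIntegral_adjoin_simple_eq (hB f hfB) hfk
  obtain ⟨φ, rfl⟩ := IsIntegrallyClosed.isIntegral_iff.1 hint
  have hφ : φ ∈ B := mem_of_algebraMap_mem_adjoin_map hdiv
    (hg ▸ hg' ▸ mem_adjoin_simple_self k _)
  exact ⟨φ, eq_adjoin_singleton_of_le_adjoin_simple hunit hφ fun b hb => hg' ▸ hB b hb⟩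

end Subalgebra

section Laurent

lemma exists_eq_adjoin_simple_of_isFractionRing {k L : Type*} [Field k] [Field L]
    [Algebra k[X] L] [IsFractionRing k[X] L] [Algebra k L] [IsScalarTower k k[X] L]
    (E : IntermediateField k L) : ∃ g, E = k⟮g⟯ := by
  let e : L ≃ₐ[k] RatFunc k :=
    (IsLocalization.algEquiv (nonZeroDivisors k[X]) L (RatFunc k)).restrictScalars k
  let g := RatFunc.Luroth.generator (E.map e.toAlgHom)
  refine ⟨e.symm g, map_injective e.toAlgHom ?_⟩
  have hg : e.toAlgHom (e.symm g) = g := e.apply_symm_apply g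
  rw [adjoin_map, Set.image_singleton, hg]
  exact RatFunc.Luroth.eq_adjoin_generator

variable {k : Type*} [Field k]

instance : IsIntegrallyClosed k[T;T⁻¹] :=
  isIntegrallyClosed_of_isLocalization (R := k[X]) _ (Submonoid.powers X)
    (powers_le_nonZeroDivisors_of_noZeroDivisors X_ne_zero)

instance : IsScalarTower k k[X] k[T;T⁻¹] :=
  .of_algebraMap_eq fun a => (toLaurent_C a).symm

instance : IsFractionRing k[X] (FractionRing k[T;T⁻¹]) := by
  have h := IsLocalization.localization_localization_isLocalization_of_has_all_units
    (Submonoid.powers (X : k[X])) (nonZeroDivisors k[T;T⁻¹]) (FractionRing k[T;T⁻¹])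
    fun x hx => hx.mem_nonZeroDivisors
  have hinj : Function.Injective (algebraMap k[X] k[T;T⁻¹]) := toLaurent_injective
  rwa [(comap_nonZeroDivisors_le_of_injective hinj).antisymm
    (nonZeroDivisors_le_comap_nonZeroDivisors_of_injective _ hinj)] at h

lemma exists_eq_C_mul_T_of_isUnit {h : k[T;T⁻¹]} (hh : IsUnit h) :
    ∃ (a : k) (n : ℤ), a ≠ 0 ∧ h = LaurentPolynomial.C a * T n := by
  obtain ⟨h', hh'⟩ := hh.exists_right_inv
  obtain ⟨n, p, hp⟩ := LaurentPolynomial.exists_T_pow h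
  obtain ⟨m, q, hq⟩ := LaurentPolynomial.exists_T_pow h'
  have hpq : p * q = X ^ (n + m) := toLaurent_injective <| by
    rw [map_mul, hp, hq, toLaurent_X_pow, Nat.cast_add, LaurentPolynomial.T_add]
    linear_combination (T (n : ℤ) * T (m : ℤ)) * hh'
  obtain ⟨i, -, hi⟩ := (dvd_prime_pow prime_X _).1 (Dvd.intro q hpq)
  obtain ⟨u, hu⟩ := hi.symm
  obtain ⟨a, ha, hau⟩ := isUnit_iff.1 u.isUnit
  refine ⟨a, i - n, ha.ne_zero, (LaurentPolynomial.isUnit_T (R := k) n).mul_right_cancel ?_⟩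
  rw [← hp, ← hu, ← hau, mul_assoc, ← LaurentPolynomial.T_add, sub_add_cancel, map_mul, toLaurent_C,
    toLaurent_X_pow, mul_comm]

theorem exists_eq_adjoin_singleton_of_forall_T_mem [IsAlgClosed k] {B : Subalgebra k k[T;T⁻¹]}
    (hdiv : ∀ b ∈ B, b ≠ 0 → ∀ e, e * b ∈ B → e ∈ B) (hT : ∀ n : ℤ, T n ∈ B → n = 0) :
    ∃ φ, B = Algebra.adjoin k {φ} := by
  obtain ⟨g, hg⟩ := exists_eq_adjoin_simple_of_isFractionRing (L := FractionRing k[T;T⁻¹])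
    (adjoin k (B.map (IsScalarTower.toAlgHom k k[T;T⁻¹] (FractionRing k[T;T⁻¹]))))
  refine exists_eq_adjoin_singleton_of_adjoin_map_eq hdiv (fun b hb hu => ?_) hg
  obtain ⟨a, n, ha, rfl⟩ := exists_eq_C_mul_T_of_isUnit hu
  have hTn : T n ∈ B := by
    rw [← LaurentPolynomial.smul_eq_C_mul] at hb
    simpa [smul_smul, inv_mul_cancel₀ ha] using B.smul_mem hb a⁻¹
  rw [hT n hTn, LaurentPolynomial.T_zero, mul_one]
  exact Subalgebra.algebraMap_mem _ a

end Laurent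

section Agreeing

section Eval

variable {k : Type*} [CommRing k]

/-- Evaluation of Laurent polynomials at a unit, as a homomorphism of algebras. -/
noncomputable def laurentEval (u : kˣ) : k[T;T⁻¹] →ₐ[k] k where
  __ := LaurentPolynomial.eval₂ (RingHom.id k) u
  commutes' a := LaurentPolynomial.eval₂_C (RingHom.id k) u a

@[simp]
lemma laurentEval_C (u : kˣ) (a : k) :
    laurentEval u (LaurentPolynomial.C a) = a :=
  LaurentPolynomial.eval₂_C (RingHom.id k) u a

@[simp]
lemma laurentEval_T (u : kˣ) (n : ℤ) :
    laurentEval u (T n) = ((u ^ n : kˣ) : k) :=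
  LaurentPolynomial.eval₂_T (RingHom.id k) u n

lemma laurentEval_toLaurent (u : kˣ) (p : k[X]) :
    laurentEval u (toLaurent p) = p.eval (u : k) :=
  LaurentPolynomial.eval₂_toLaurent (RingHom.id k) u p

lemma finite_setOf_laurentEval_eq_zero [IsDomain k] {h : k[T;T⁻¹]} (hh : h ≠ 0) :
    {u : kˣ | laurentEval u h = 0}.Finite := by
  obtain ⟨n, p, hp⟩ := LaurentPolynomial.exists_T_pow h
  have hp0 : p ≠ 0 := by
    rintro rfl
    rw [map_zero, eq_comm, (LaurentPolynomial.isUnit_T _).mul_left_eq_zero] at hp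
    exact hh hp
  refine ((p.rootSet_finite k).preimage Units.val_injective.injOn).subset fun u hu => ?_
  rw [Set.mem_preimage, mem_rootSet, coe_aeval_eq_eval, ← laurentEval_toLaurent, hp, map_mul,
    hu.out, zero_mul]
  exact ⟨hp0, rfl⟩

end Eval

variable {k ι : Type*} [CommRing k]

/-- The algebra of the Laurent polynomials that take the same value at `x i` and at `y i` for all
but finitely many `i`. -/
noncomputable def agreeingSubalgebra (x y : ι → kˣ) : Subalgebra k k[T;T⁻¹] where
  carrier := {h | ∀ᶠ i in cofinite, laurentEval (x i) h = laurentEval (y i) h}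
  mul_mem' {g h} hg hh := by
    rw [Set.mem_ofPred_eq] at hg hh ⊢
    filter_upwards [hg, hh] with i hgi hhi
    rw [map_mul, map_mul, hgi, hhi]
  add_mem' {g h} hg hh := by
    rw [Set.mem_ofPred_eq] at hg hh ⊢
    filter_upwards [hg, hh] with i hgi hhi
    rw [map_add, map_add, hgi, hhi]
  algebraMap_mem' a := by
    refine Set.mem_ofPred_eq ▸ .of_forall fun i => ?_
    rw [AlgHom.commutes, AlgHom.commutes]

lemma mem_agreeingSubalgebra {x y : ι → kˣ} {h : k[T;T⁻¹]} :
    h ∈ agreeingSubalgebra x y ↔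
      ∀ᶠ i in cofinite, laurentEval (x i) h = laurentEval (y i) h := Iff.rfl

variable [IsDomain k] {x y : ι → kˣ} (hxy : Function.Injective fun i => x i / y i)
include hxy

lemma mem_agreeingSubalgebra_of_mul_mem {b e : k[T;T⁻¹]} (hb : b ∈ agreeingSubalgebra x y)
    (hb0 : b ≠ 0) (heb : e * b ∈ agreeingSubalgebra x y) : e ∈ agreeingSubalgebra x y := by
  have hZ := finite_setOf_laurentEval_eq_zero hb0
  have hne : ∀ᶠ i in cofinite, ¬(laurentEval (x i) b = 0 ∧ laurentEval (y i) b = 0) := by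
    refine (((hZ.prod hZ).image fun u => u.1 / u.2).preimage hxy.injOn).eventually_cofinite_notMem
      |>.mono fun i hi h0 => hi ⟨(x i, y i), h0, rfl⟩
  rw [mem_agreeingSubalgebra] at hb heb ⊢
  filter_upwards [hb, heb, hne] with i hbi hebi hi
  rw [map_mul, map_mul, hbi] at hebi
  exact mul_right_cancel₀ (fun h0 => hi ⟨hbi.trans h0, h0⟩) hebi

lemma eq_zero_of_T_mem_agreeingSubalgebra [Infinite ι] {n : ℤ}
    (hn : T n ∈ agreeingSubalgebra x y) : n = 0 := by
  by_contra hn0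
  have hT : (T n - 1 : k[T;T⁻¹]) ≠ 0 := by
    rw [sub_ne_zero, ← LaurentPolynomial.T_zero]
    exact (AddMonoidAlgebra.single_left_injective one_ne_zero).ne hn0
  refine (cofinite_neBot (α := ι)).ne (eventually_false_iff_eq_bot.1 ?_)
  filter_upwards [hn, ((finite_setOf_laurentEval_eq_zero hT).preimage
    hxy.injOn).eventually_cofinite_notMem] with i hi hne
  refine hne ?_
  rw [laurentEval_T, laurentEval_T, Units.val_inj] at hi
  rw [Set.mem_preimage, Set.mem_ofPred_eq, map_sub, laurentEval_T, map_one, div_zpow, hi, div_self',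
    Units.val_one, sub_self]

end Agreeing

section Star

section Instances

variable {R : Type*} [CommRing R] [StarRing R]

/-- The involution `∑ aₙ Tⁿ ↦ ∑ star aₙ T⁻ⁿ`, which over `ℂ` conjugates the values on the unit
circle. -/
noncomputable instance : StarRing R[T;T⁻¹] where
  star h := LaurentPolynomial.invert (AddMonoidAlgebra.mapRingHom ℤ (starRingEnd R) h)
  star_involutive h := by
    ext n
    simp
  star_mul g h := by rw [map_mul, map_mul, mul_comm]
  star_add g h := by rw [map_add, map_add]

lemma star_eq_invert (h : R[T;T⁻¹]) : star h =
    LaurentPolynomial.invert (AddMonoidAlgebra.mapRingHom ℤ (starRingEnd R) h) := rfl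

lemma star_C_mul_T (a : R) (n : ℤ) :
    star (LaurentPolynomial.C a * T n) = LaurentPolynomial.C (star a) * T (-n) := by
  rw [star_eq_invert, ← LaurentPolynomial.single_eq_C_mul_T, AddMonoidAlgebra.mapRingHom_single,
    LaurentPolynomial.single_eq_C_mul_T, map_mul, LaurentPolynomial.invert_C,
    LaurentPolynomial.invert_T, starRingEnd_apply]

instance : StarModule R R[T;T⁻¹] where
  star_smul a h := by
    have hC : star (LaurentPolynomial.C a) = LaurentPolynomial.C (star a) := by
      simpa using star_C_mul_T a 0
    rw [LaurentPolynomial.smul_eq_C_mul, star_mul', hC, ← LaurentPolynomial.smul_eq_C_mul]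

lemma laurentEval_star {u : Rˣ} (hu : star u = u⁻¹) (h : R[T;T⁻¹]) :
    laurentEval u (star h) = star (laurentEval u h) := by
  induction h using LaurentPolynomial.induction_on' with
  | add g h hg hh => rw [star_add, map_add, map_add, star_add, hg, hh]
  | C_mul_T n a =>
    rw [star_C_mul_T, map_mul, map_mul, laurentEval_C, laurentEval_C, laurentEval_T, laurentEval_T,
      star_mul', ← Units.coe_star, star_zpow, hu, inv_zpow']

end Instances

section Generator

variable {k A : Type*} [Field k] [CommRing A] [Algebra k A]

lemma adjoin_singleton_smul_add_algebraMap {a : k} (ha : a ≠ 0) (b : k) (x : A) :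
    Algebra.adjoin k {a • x + algebraMap k A b} = Algebra.adjoin k {x} := by
  have hx := Algebra.self_mem_adjoin_singleton k x
  have hy := Algebra.self_mem_adjoin_singleton k (a • x + algebraMap k A b)
  apply le_antisymm <;> refine Algebra.adjoin_le (Set.singleton_subset_iff.2 ?_)
  · exact add_mem (Subalgebra.smul_mem _ hx a) (Subalgebra.algebraMap_mem _ b)
  · have := Subalgebra.smul_mem _ (sub_mem hy (Subalgebra.algebraMap_mem _ b)) a⁻¹
    rwa [add_sub_cancel_right, inv_smul_smul₀ ha] at this

variable [StarRing k] [StarRing A] [StarModule k A]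

lemma star_aeval (x : A) (p : k[X]) :
    star (aeval x p) = aeval (star x) (p.map (starRingEnd k)) :=
  p.map_aeval_eq_aeval_map (φ := starRingEnd k) (ψ := starRingEnd A)
    (RingHom.ext fun a => algebraMap_star_comm a) x

lemma exists_star_eq_smul_add_algebraMap {φ : A} (hφ : Transcendental k φ)
    (hstar : star φ ∈ Algebra.adjoin k {φ}) : ∃ a b : k, star φ = a • φ + algebraMap k A b := by
  rw [Algebra.adjoin_singleton_eq_range_aeval] at hstar
  obtain ⟨P, hP : aeval φ P = star φ⟩ := hstar
  have hcomp : (P.map (starRingEnd k)).comp P = X := by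
    refine transcendental_iff_injective.1 hφ ?_
    rw [aeval_comp, aeval_X, hP, ← star_aeval, hP, star_star]
  have hdeg : P.natDegree = 1 := by
    have := congrArg natDegree hcomp
    rw [natDegree_comp, natDegree_map, natDegree_X] at this
    exact Nat.eq_one_of_mul_eq_one_left this
  obtain ⟨a, b, rfl⟩ := exists_eq_X_add_C_of_natDegree_le_one hdeg.le
  exact ⟨a, b, by simpa [Algebra.smul_def] using hP.symm⟩

theorem exists_isSelfAdjoint_adjoin_singleton_eq {A : Type*} [CommRing A] [IsDomain A]
    [Algebra ℂ A] [StarRing A] [StarModule ℂ A] {φ : A} (hstar : star φ ∈ Algebra.adjoin ℂ {φ}) :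
    ∃ ψ, IsSelfAdjoint ψ ∧ Algebra.adjoin ℂ {ψ} = Algebra.adjoin ℂ {φ} := by
  by_cases hφ : IsAlgebraic ℂ φ
  · obtain ⟨c, rfl⟩ : φ ∈ (algebraMap ℂ A).range :=
      minpoly.mem_range_of_degree_eq_one ℂ φ <| IsAlgClosed.degree_eq_one_of_irreducible ℂ <|
        minpoly.irreducible hφ.isIntegral
    refine ⟨0, .zero A, ?_⟩
    rw [Algebra.adjoin_singleton_algebraMap, Algebra.adjoin_singleton_zero]
  obtain ⟨a, b, hab⟩ := exists_star_eq_smul_add_algebraMap hφ hstar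
  obtain ⟨c, hc⟩ : ∃ c : ℂ, c + star c * a ≠ 0 := by
    by_contra! h
    have h1 := h 1
    have hI := h Complex.I
    rw [Complex.star_def, Complex.conj_I] at hI
    rw [star_one] at h1
    have : 2 * Complex.I = 0 := by linear_combination hI + Complex.I * h1
    simp at this
  refine ⟨c • φ + star (c • φ), .add_star_self _, ?_⟩
  have hψ : c • φ + star (c • φ) =
      (c + star c * a) • φ + algebraMap ℂ A (star c * b) := by
    rw [star_smul, hab]
    simp only [Algebra.smul_def, map_add, map_mul]
    ring
  rw [hψ, adjoin_singleton_smul_add_algebraMap hc]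

end Generator

end Star

section Circle

/-- The point `exp (iθ)` of the unit circle, as a unit of `ℂ`. -/
noncomputable def circleUnit (θ : ℝ) : ℂˣ := Circle.toUnits (Circle.exp θ)

lemma coe_circleUnit (θ : ℝ) : (circleUnit θ : ℂ) = Complex.exp (θ * Complex.I) :=
  Circle.coe_exp θ

lemma circleUnit_neg (θ : ℝ) : circleUnit (-θ) = (circleUnit θ)⁻¹ := by
  rw [circleUnit, Circle.exp_neg, map_inv, circleUnit]

lemma circleUnit_add_div (x δ : ℝ) : circleUnit (x + δ) / circleUnit x = circleUnit δ := by
  rw [circleUnit, circleUnit, Circle.exp_add, map_mul, mul_div_cancel_left, circleUnit]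

lemma star_circleUnit (θ : ℝ) : star (circleUnit θ) = (circleUnit θ)⁻¹ := by
  rw [← circleUnit_neg]
  ext
  rw [Units.coe_star, coe_circleUnit, coe_circleUnit, Complex.star_def, ← Complex.exp_conj]
  simp

lemma circleUnit_injOn_Icc : Set.InjOn circleUnit (Set.Icc (-1) 1) := by
  have hval : Function.Injective Circle.toUnits := fun a b h => Circle.ext (congrArg Units.val h)
  exact hval.comp_injOn (Circle.exp_injOn_Icc (by linarith [Real.pi_gt_three]))

namespace IsTrigPoly

lemma exists_laurentPolynomial {f : ℝ → ℝ} (hf : IsTrigPoly f) :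
    ∃ F : ℂ[T;T⁻¹], ∀ θ, laurentEval (circleUnit θ) F = f θ := by
  induction hf using Algebra.adjoin_induction with
  | mem f hf =>
    rcases hf with rfl | rfl
    · refine ⟨LaurentPolynomial.C (Complex.I / 2) * (T (-1) - T 1), fun θ => ?_⟩
      rw [map_mul, map_sub, laurentEval_C, laurentEval_T, laurentEval_T, zpow_neg_one, zpow_one,
        ← circleUnit_neg, coe_circleUnit, coe_circleUnit, Complex.ofReal_sin, Complex.sin,
        Complex.ofReal_neg]
      ring
    · refine ⟨LaurentPolynomial.C (1 / 2) * (T 1 + T (-1)), fun θ => ?_⟩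
      rw [map_mul, map_add, laurentEval_C, laurentEval_T, laurentEval_T, zpow_neg_one, zpow_one,
        ← circleUnit_neg, coe_circleUnit, coe_circleUnit, Complex.ofReal_cos, Complex.cos,
        Complex.ofReal_neg]
      ring
  | algebraMap r => exact ⟨LaurentPolynomial.C (r : ℂ), fun θ => laurentEval_C _ _⟩
  | add f g _ _ hf hg =>
    obtain ⟨F, hF⟩ := hf
    obtain ⟨G, hG⟩ := hg
    exact ⟨F + G, fun θ => by rw [map_add, hF, hG, Pi.add_apply, Complex.ofReal_add]⟩
  | mul f g _ _ hf hg =>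
    obtain ⟨F, hF⟩ := hf
    obtain ⟨G, hG⟩ := hg
    exact ⟨F * G, fun θ => by rw [map_mul, hF, hG, Pi.mul_apply, Complex.ofReal_mul]⟩

lemma polynomial_eval {f : ℝ → ℝ} (hf : IsTrigPoly f) (p : ℝ[X]) :
    IsTrigPoly fun θ => p.eval (f θ) := by
  have : (fun θ => p.eval (f θ)) = aeval f p := funext fun θ => (aeval_fn_apply p f θ).symm
  rw [this]
  exact Algebra.adjoin_le (Set.singleton_subset_iff.2 hf) (aeval_mem_adjoin_singleton ℝ f)

lemma cos_int_mul (n : ℤ) : IsTrigPoly fun θ => Real.cos (n * θ) := by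
  have hcos : IsTrigPoly Real.cos := Algebra.subset_adjoin (.inr rfl)
  simpa only [Chebyshev.T_real_cos] using hcos.polynomial_eval (Chebyshev.T ℝ n)

lemma sin_int_mul (n : ℤ) : IsTrigPoly fun θ => Real.sin (n * θ) := by
  have hcos : IsTrigPoly Real.cos := Algebra.subset_adjoin (.inr rfl)
  have hsin : IsTrigPoly Real.sin := Algebra.subset_adjoin (.inl rfl)
  have h (θ : ℝ) : Real.sin (n * θ) = (Chebyshev.U ℝ (n - 1)).eval (Real.cos θ) * Real.sin θ := by
    rw [Chebyshev.U_real_cos, Int.cast_sub, Int.cast_one, sub_add_cancel]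
  simp only [h]
  exact mul_mem (hcos.polynomial_eval _) hsin

lemma re_laurentEval_circleUnit (h : ℂ[T;T⁻¹]) :
    IsTrigPoly fun θ => (laurentEval (circleUnit θ) h).re := by
  induction h using LaurentPolynomial.induction_on' with
  | add g h hg hh =>
    simp only [map_add, Complex.add_re]
    exact add_mem hg hh
  | C_mul_T n a =>
    have h (θ : ℝ) : (laurentEval (circleUnit θ) (LaurentPolynomial.C a * T n)).re =
        a.re * Real.cos (n * θ) - a.im * Real.sin (n * θ) := by
      rw [map_mul, laurentEval_C, laurentEval_T, Units.val_zpow_eq_zpow_val, coe_circleUnit,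
        ← Complex.exp_int_mul, ← mul_assoc, ← Complex.ofReal_intCast, ← Complex.ofReal_mul,
        Complex.mul_re, Complex.exp_ofReal_mul_I_re, Complex.exp_ofReal_mul_I_im]
    simp only [h]
    exact sub_mem (Subalgebra.smul_mem _ (cos_int_mul n) a.re)
      (Subalgebra.smul_mem _ (sin_int_mul n) a.im)

end IsTrigPoly

lemma exists_eval_eq_re_eval_ofReal (P : ℂ[X]) :
    ∃ p : ℝ[X], ∀ x : ℝ, p.eval x = (P.eval (x : ℂ)).re := by
  induction P using Polynomial.induction_on' with
  | add p q hp hq =>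
    obtain ⟨a, ha⟩ := hp
    obtain ⟨b, hb⟩ := hq
    exact ⟨a + b, fun x => by rw [eval_add, eval_add, Complex.add_re, ha, hb]⟩
  | monomial n a =>
    exact ⟨monomial n a.re, fun x => by
      rw [eval_monomial, eval_monomial, ← Complex.ofReal_pow, Complex.re_mul_ofReal]⟩

lemma re_laurentEval_circleUnit_of_isSelfAdjoint {ψ : ℂ[T;T⁻¹]} (hψ : IsSelfAdjoint ψ) (θ : ℝ) :
    ((laurentEval (circleUnit θ) ψ).re : ℂ) = laurentEval (circleUnit θ) ψ := by
  refine Complex.conj_eq_iff_re.1 ?_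
  rw [← Complex.star_def, ← laurentEval_star (star_circleUnit θ), hψ.star_eq]

lemma exists_eq_eval_re_laurentEval {ψ F : ℂ[T;T⁻¹]} (hψ : IsSelfAdjoint ψ)
    (hF : F ∈ Algebra.adjoin ℂ {ψ}) {f : ℝ → ℝ} (hf : ∀ θ, laurentEval (circleUnit θ) F = f θ) :
    ∃ p : ℝ[X], ∀ θ, f θ = p.eval (laurentEval (circleUnit θ) ψ).re := by
  rw [Algebra.adjoin_singleton_eq_range_aeval] at hF
  obtain ⟨P, rfl⟩ := hF
  obtain ⟨p, hp⟩ := exists_eval_eq_re_eval_ofReal P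
  refine ⟨p, fun θ => ?_⟩
  rw [hp, re_laurentEval_circleUnit_of_isSelfAdjoint hψ, ← coe_aeval_eq_eval, aeval_algHom_apply]
  exact (congrArg Complex.re (hf θ)).symm

end Circle

section Chords

section TopologicalGroup

variable {G Y : Type*} [AddGroup G] [TopologicalSpace G] [IsTopologicalAddGroup G]
  [PreconnectedSpace G] [LinearOrder Y] [TopologicalSpace Y] [OrderClosedTopology Y] {w : G → Y}
  {c : G}

lemma eventually_exists_add_eq_of_isLocalMax (hw : Continuous w) (hc : IsLocalMax w c) :
    ∀ᶠ δ in nhds 0, ∃ x, w (x + δ) = w x := by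
  have hadd : ∀ᶠ δ in nhds 0, w (c + δ) ≤ w c :=
    ((continuous_const_add c).tendsto' 0 c (add_zero c)).eventually hc
  have hsub : ∀ᶠ δ in nhds 0, w (c - δ) ≤ w c :=
    ((continuous_const.sub continuous_id).tendsto' 0 c (sub_zero c)).eventually hc
  filter_upwards [hadd, hsub] with δ hadd hsub
  exact intermediate_value_univ₂ (hw.comp (continuous_add_const δ)) hw hadd
    (b := c - δ) (hsub.trans_eq (congrArg w (sub_add_cancel c δ).symm))

lemma eventually_exists_add_eq_of_isLocalExtr (hw : Continuous w) (hc : IsLocalExtr w c) :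
    ∀ᶠ δ in nhds 0, ∃ x, w (x + δ) = w x :=
  hc.elim (eventually_exists_add_eq_of_isLocalMax (Y := Yᵒᵈ) hw)
    (eventually_exists_add_eq_of_isLocalMax hw)

end TopologicalGroup

variable {Y : Type*} [LinearOrder Y] [TopologicalSpace Y] [OrderTopology Y] {w : ℝ → Y}

lemma eventually_exists_add_eq_of_not_injective (hw : Continuous w)
    (hinj : ¬ Function.Injective w) : ∀ᶠ δ in nhds 0, ∃ x, w (x + δ) = w x := by
  obtain ⟨a, b, hab, hne⟩ := Function.not_injective_iff.1 hinj
  wlog hlt : a < b generalizing a b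
  · exact this b a hab.symm hne.symm (hne.lt_or_gt.resolve_left hlt)
  obtain ⟨c, -, hc⟩ := exists_isLocalExtr_Ioo hlt hw.continuousOn hab
  exact eventually_exists_add_eq_of_isLocalExtr hw hc

end Chords

lemma exists_isSelfAdjoint_agreeingSubalgebra_eq_adjoin {ι : Type*} [Infinite ι]
    {x y : ι → ℂˣ} (hx : ∀ i, star (x i) = (x i)⁻¹) (hy : ∀ i, star (y i) = (y i)⁻¹)
    (hxy : Function.Injective fun i => x i / y i) :
    ∃ ψ, IsSelfAdjoint ψ ∧ agreeingSubalgebra x y = Algebra.adjoin ℂ {ψ} := by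
  obtain ⟨φ, hφ⟩ := exists_eq_adjoin_singleton_of_forall_T_mem
    (fun b hb hb0 e => mem_agreeingSubalgebra_of_mul_mem hxy hb hb0)
    (fun n => eq_zero_of_T_mem_agreeingSubalgebra hxy)
  have hstar : star φ ∈ agreeingSubalgebra x y := by
    have h : φ ∈ agreeingSubalgebra x y := hφ ▸ Algebra.self_mem_adjoin_singleton ℂ φ
    refine (mem_agreeingSubalgebra.1 h).mono fun i hi => ?_
    rw [laurentEval_star (hx i), laurentEval_star (hy i), hi]
  obtain ⟨ψ, hψ, hadj⟩ := exists_isSelfAdjoint_adjoin_singleton_eq (hφ ▸ hstar)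
  exact ⟨ψ, hψ, hφ.trans hadj.symm⟩

end

theorem weak_implies_strong_composition_general {Y : Type*} [LinearOrder Y] [TopologicalSpace Y]
    [OrderTopology Y] {w : ℝ → Y} (hw : Continuous w) (hinj : ¬ Function.Injective w) :
    ∃ w₀, IsTrigPoly w₀ ∧
      ∀ f, IsTrigPoly f → f.FactorsThrough w →
        ∃ p : Polynomial ℝ, ∀ θ, f θ = p.eval (w₀ θ) := by
  let D := {δ ∈ Set.Icc (-1 : ℝ) 1 | ∃ x, w (x + δ) = w x}
  have hD : D ∈ nhds 0 := Filter.inter_mem (Icc_mem_nhds (by norm_num) one_pos)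
    (eventually_exists_add_eq_of_not_injective hw hinj)
  have : Infinite D := (infinite_of_mem_nhds 0 hD).to_subtype
  choose x hx using fun δ : D => δ.2.2
  have hxinj : Function.Injective fun δ : D => circleUnit (x δ + δ) / circleUnit (x δ) := by
    simp only [circleUnit_add_div]
    exact (circleUnit_injOn_Icc.mono fun δ hδ => hδ.1).injective
  obtain ⟨ψ, hψ, hgen⟩ := exists_isSelfAdjoint_agreeingSubalgebra_eq_adjoin
    (fun _ => star_circleUnit _) (fun _ => star_circleUnit _) hxinj
  refine ⟨_, IsTrigPoly.re_laurentEval_circleUnit ψ, fun f hf hfw => ?_⟩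
  obtain ⟨F, hF⟩ := hf.exists_laurentPolynomial
  refine exists_eq_eval_re_laurentEval hψ (hgen ▸ ?_) hF
  exact mem_agreeingSubalgebra.2 <| .of_forall fun δ => by rw [hF, hF, hfw (hx δ)]

/-- Weak composition condition implies strong composition condition. -/
theorem weak_implies_strong_composition
    (l m : ℝ → ℝ) (hl : IsTrigPoly l) (hm : IsTrigPoly m)
    (lt mt w : ℝ → ℝ)
    (hlt : Continuous lt) (hmt : Continuous mt) (hwc : Continuous w)
    (hper : ∀ θ : ℝ, w (θ + 2 * Real.pi) = w θ)
    (hcl : ∀ θ : ℝ, l θ = lt (w θ))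
    (hcm : ∀ θ : ℝ, m θ = mt (w θ)) :
    ∃ (p q : Polynomial ℝ) (w₀ : ℝ → ℝ), IsTrigPoly w₀ ∧
      (∀ θ : ℝ, l θ = p.eval (w₀ θ)) ∧ (∀ θ : ℝ, m θ = q.eval (w₀ θ)) := by
  have hinj : ¬ Function.Injective w := fun h => by simpa [Real.pi_ne_zero] using h (hper 0)
  obtain ⟨w₀, hw₀, hfac⟩ := weak_implies_strong_composition_general hwc hinj
  obtain ⟨p, hp⟩ := hfac l hl fun a b h => by rw [hcl, hcl, h]
  obtain ⟨q, hq⟩ := hfac m hm fun a b h => by rw [hcm, hcm, h]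
  exact ⟨p, q, w₀, hw₀, hp, hq⟩
end

section
/- Let l̂ and m̂ be trigonometric polynomials and set l(θ) = ∫₀^θ l̂(s) ds and m(θ) = ∫₀^θ m̂(s) ds. Assume there exist continuously differentiable functions l̃, m̃, w : ℝ → ℝ with w 2π-periodic such that l(θ) = l̃(w(θ)) and m(θ) = m̃(w(θ)) for all θ. Then there exists ε > 0 such that every differentiable function y : ℝ → ℝ satisfying the Abel differential equation y′(θ) = l̂(θ)·y(θ)³ + m̂(θ)·y(θ)² for all θ ∈ [0, 2π] and |y(0)| < ε satisfies y(2π) = y(0). -/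
/-!
With `p = deriv l̃` and `q = deriv m̃`, the chain rule turns the composition condition into
`l̂ = w' · (p ∘ w)` and `m̂ = w' · (q ∘ w)`. Hence if `u` solves the Abel equation
`u' = p u³ + q u²`, then `u ∘ w` solves the original one. Because the right-hand side vanishes to
second order at `0`, the solution `u` with `u (w 0) = c` exists on all of `w '' [0, 2π]` as soon as
`c` is small. By uniqueness every solution `y` with `y 0 = c` is `u ∘ w`, and so
`y (2π) = u (w (2π)) = u (w 0) = y 0`. Only the vanishing of the 1-jet of the right-hand side
matters, so the argument covers `y' = ∑ᵢ fᵢ(θ) gᵢ(y)` in any Banach space.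
-/

open Set Metric
open scoped NNReal Topology

theorem IsTrigPoly.continuous {f : ℝ → ℝ} (hf : IsTrigPoly f) : Continuous f := by
  have adjoin_le_continuous :
      Algebra.adjoin ℝ {Real.sin, Real.cos} ≤ (continuousSubalgebra : Subalgebra ℝ (ℝ → ℝ)) :=
    Algebra.adjoin_le <| by
      rintro _ (rfl | rfl)
      exacts [Real.continuous_sin, Real.continuous_cos]
  exact adjoin_le_continuous hf

theorem hasDerivAt_of_eq_integral {E : Type*} [NormedAddCommGroup E] [NormedSpace ℝ E]
    [CompleteSpace E] {f F : ℝ → E} {a : ℝ} (hf : Continuous f)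
    (hF : ∀ x, F x = ∫ t in a..x, f t) (x : ℝ) : HasDerivAt F (f x) x :=
  funext hF ▸ (hf.integral_hasStrictDerivAt a x).hasDerivAt

theorem exists_sum_nnnorm_le_of_isCompact {ι X F : Type*} [Fintype ι] [TopologicalSpace X]
    [SeminormedAddCommGroup F] {f : ι → X → F} {s : Set X} (hs : IsCompact s)
    (hf : ∀ i, ContinuousOn (f i) s) : ∃ C : ℝ≥0, ∀ t ∈ s, ∑ i, ‖f i t‖₊ ≤ C := by
  obtain ⟨C, hC⟩ := hs.bddAbove_image (continuousOn_finsetSum Finset.univ fun i _ => (hf i).nnnorm)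
  exact ⟨C, fun t ht => hC (mem_image_of_mem _ ht)⟩

section IntegralCurves

variable {E : Type*} [NormedAddCommGroup E] {v : ℝ → E → E}

theorem isPicardLindelof_of_equilibrium {tmin tmax : ℝ} {t₀ : Icc tmin tmax} {x₀ : E} {r K : ℝ≥0}
    (hlip : ∀ t ∈ Icc tmin tmax, LipschitzOnWith K (v t) (closedBall x₀ r))
    (hcont : ∀ x ∈ closedBall x₀ r, ContinuousOn (v · x) (Icc tmin tmax))
    (hzero : ∀ t ∈ Icc tmin tmax, v t x₀ = 0) (hK : K * (tmax - tmin) ≤ 1 / 2) :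
    IsPicardLindelof v t₀ x₀ r (r / 2) (K * r) K where
  lipschitzOnWith := hlip
  continuousOn := hcont
  norm_le t ht x hx :=
    calc ‖v t x‖ = dist (v t x) (v t x₀) := by rw [hzero t ht, dist_zero_right]
      _ ≤ K * dist x x₀ := (hlip t ht).dist_le_mul x hx x₀ (mem_closedBall_self r.2)
      _ ≤ K * r := by gcongr; exact hx
  mul_max_le := by
    have max_le_length : max (tmax - t₀) (t₀ - tmin) ≤ tmax - tmin :=
      max_le (sub_le_sub_left t₀.2.1 _) (sub_le_sub_right t₀.2.2 _)
    calc ((K * r : ℝ≥0) : ℝ) * max (tmax - t₀) (t₀ - tmin)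
        ≤ r * (K * (tmax - tmin)) := by
          rw [NNReal.coe_mul, mul_comm (K : ℝ), mul_assoc]; gcongr
      _ ≤ r * (1 / 2) := by gcongr
      _ = r - (r / 2 : ℝ≥0) := by push_cast; ring

variable [NormedSpace ℝ E]

theorem isIntegralCurveOn_comp {u : ℝ → E} {w : ℝ → ℝ} {s t : Set ℝ}
    (hu : IsIntegralCurveOn u v t) (hw : DifferentiableOn ℝ w s) (hst : MapsTo w s t) :
    IsIntegralCurveOn (u ∘ w) (fun θ x => derivWithin w s θ • v (w θ) x) s :=
  fun θ hθ => (hu (w θ) (hst hθ)).scomp θ (hw θ hθ).hasDerivWithinAt hst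

theorem isIntegralCurveOn_Icc_unique {y z : ℝ → E} {a b : ℝ}
    (hv : ∀ C, IsCompact C → ∃ K, ∀ t ∈ Icc a b, LipschitzOnWith K (v t) C)
    (hy : IsIntegralCurveOn y v (Icc a b)) (hz : IsIntegralCurveOn z v (Icc a b))
    (hyz : y a = z a) : EqOn y z (Icc a b) := by
  obtain ⟨K, hK⟩ := hv (y '' Icc a b ∪ z '' Icc a b)
    ((isCompact_Icc.image_of_continuousOn hy.continuousOn).union
      (isCompact_Icc.image_of_continuousOn hz.continuousOn))
  have hasDerivWithinAt_Ici {x : ℝ → E} (hx : IsIntegralCurveOn x v (Icc a b)) :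
      ∀ t ∈ Ico a b, HasDerivWithinAt x (v t (x t)) (Ici t) t := fun t ht =>
    (hx t (Ico_subset_Icc_self ht)).mono_of_mem_nhdsWithin (Icc_mem_nhdsGE_of_mem ht)
  exact ODE_solution_unique_of_mem_Icc_right (fun t ht => hK t (Ico_subset_Icc_self ht))
    hy.continuousOn (hasDerivWithinAt_Ici hy)
    (fun t ht => .inl (mem_image_of_mem y (Ico_subset_Icc_self ht)))
    hz.continuousOn (hasDerivWithinAt_Ici hz)
    (fun t ht => .inr (mem_image_of_mem z (Ico_subset_Icc_self ht))) hyz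

theorem exists_isIntegralCurveOn_near_equilibrium [CompleteSpace E] {tmin tmax : ℝ}
    (t₀ : Icc tmin tmax) {x₀ : E}
    (hlip : ∀ K : ℝ≥0, 0 < K → ∃ U ∈ 𝓝 x₀, ∀ t ∈ Icc tmin tmax, LipschitzOnWith K (v t) U)
    (hcont : ∀ x, ContinuousOn (v · x) (Icc tmin tmax))
    (hzero : ∀ t ∈ Icc tmin tmax, v t x₀ = 0) :
    ∃ ε > (0 : ℝ), ∀ c ∈ closedBall x₀ ε, ∃ u : ℝ → E,
      u t₀ = c ∧ IsIntegralCurveOn u v (Icc tmin tmax) := by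
  have length_nonneg : 0 ≤ tmax - tmin := sub_nonneg.2 (t₀.2.1.trans t₀.2.2)
  obtain ⟨K, hKpos, hK⟩ : ∃ K : ℝ≥0, 0 < K ∧ K * (tmax - tmin) ≤ 1 / 2 := by
    lift tmax - tmin to ℝ≥0 using length_nonneg with T
    refine ⟨(2 * (T + 1))⁻¹, by positivity, ?_⟩
    push_cast
    rw [inv_mul_le_iff₀ (by positivity)]
    linarith
  obtain ⟨U, hU, hUlip⟩ := hlip K hKpos
  obtain ⟨r, hr, hrU⟩ := nhds_basis_closedBall.mem_iff.1 hU
  lift r to ℝ≥0 using hr.le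
  have picard : IsPicardLindelof v t₀ x₀ r (r / 2) (K * r) K :=
    isPicardLindelof_of_equilibrium (fun t ht => (hUlip t ht).mono hrU) (fun x _ => hcont x)
      hzero hK
  exact ⟨(r / 2 : ℝ≥0), by push_cast; exact half_pos hr,
    fun c hc => picard.exists_eq_forall_mem_Icc_hasDerivWithinAt hc⟩

theorem exists_forall_isIntegralCurveOn_eq_of_pullback [CompleteSpace E] {f : ℝ → E → E}
    {w : ℝ → ℝ} {a b : ℝ} {x₀ : E} (hab : a ≤ b) (hw : DifferentiableOn ℝ w (Icc a b))
    (hwab : w b = w a) (hfv : ∀ θ ∈ Icc a b, ∀ x, f θ x = derivWithin w (Icc a b) θ • v (w θ) x)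
    (hf : ∀ C, IsCompact C → ∃ K, ∀ θ ∈ Icc a b, LipschitzOnWith K (f θ) C)
    (hlip : ∀ K : ℝ≥0, 0 < K → ∃ U ∈ 𝓝 x₀, ∀ t ∈ w '' Icc a b, LipschitzOnWith K (v t) U)
    (hcont : ∀ x, ContinuousOn (v · x) (w '' Icc a b))
    (hzero : ∀ t ∈ w '' Icc a b, v t x₀ = 0) :
    ∃ ε > (0 : ℝ), ∀ y : ℝ → E, IsIntegralCurveOn y f (Icc a b) → dist (y a) x₀ < ε →
      y b = y a := by
  obtain ⟨tmin, tmax, himage⟩ : ∃ tmin tmax, w '' Icc a b = Icc tmin tmax :=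
    ⟨_, _, hw.continuousOn.image_Icc hab⟩
  rw [himage] at hlip hcont hzero
  have hmaps : MapsTo w (Icc a b) (Icc tmin tmax) := himage ▸ mapsTo_image w _
  obtain ⟨ε, hε, hsol⟩ := exists_isIntegralCurveOn_near_equilibrium
    ⟨w a, hmaps (left_mem_Icc.2 hab)⟩ hlip hcont hzero
  refine ⟨ε, hε, fun y hy hya => ?_⟩
  obtain ⟨u, hua, hu⟩ := hsol (y a) (mem_closedBall.2 hya.le)
  have huw : IsIntegralCurveOn (u ∘ w) f (Icc a b) := fun θ hθ =>
    (isIntegralCurveOn_comp hu hw hmaps θ hθ).congr_deriv (hfv θ hθ _).symm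
  calc y b = u (w b) := isIntegralCurveOn_Icc_unique hf hy huw hua.symm (right_mem_Icc.2 hab)
    _ = y a := by rw [hwab, hua]

end IntegralCurves

section SeparatedField

variable {ι E : Type*} [Fintype ι] [NormedAddCommGroup E] [NormedSpace ℝ E]
  {f : ι → ℝ → ℝ} {g : ι → E → E}

/-- The time-dependent vector field `(t, x) ↦ ∑ᵢ fᵢ(t) gᵢ(x)`, the right-hand side of a generalized
Abel equation; the Abel equation itself has `g = ![(· ^ 3), (· ^ 2)]`. -/
def separatedField (f : ι → ℝ → ℝ) (g : ι → E → E) (t : ℝ) (x : E) : E :=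
  ∑ i, f i t • g i x

theorem lipschitzOnWith_separatedField {C K : ℝ≥0} {t : ℝ} {s : Set E}
    (hf : ∑ i, ‖f i t‖₊ ≤ C) (hg : ∀ i, LipschitzOnWith K (g i) s) :
    LipschitzOnWith (C * K) (separatedField f g t) s := by
  refine lipschitzOnWith_iff_norm_sub_le.2 fun x hx y hy => ?_
  calc ‖separatedField f g t x - separatedField f g t y‖
      = ‖∑ i, f i t • (g i x - g i y)‖ := by
        simp only [separatedField, smul_sub, Finset.sum_sub_distrib]
    _ ≤ ∑ i, ‖f i t‖ * (K * ‖x - y‖) := norm_sum_le_of_le _ fun i _ => by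
        rw [norm_smul]
        gcongr
        exact (hg i).norm_sub_le hx hy
    _ = ((∑ i, ‖f i t‖₊ : ℝ≥0) : ℝ) * (K * ‖x - y‖) := by
        rw [← Finset.sum_mul]; push_cast; rfl
    _ ≤ C * (K * ‖x - y‖) := by gcongr
    _ = (C * K : ℝ≥0) * ‖x - y‖ := by push_cast; ring

theorem exists_lipschitzOnWith_separatedField_of_isCompact {s : Set ℝ} (hs : IsCompact s)
    (hf : ∀ i, ContinuousOn (f i) s) (hg : ∀ i, LocallyLipschitz (g i)) {C : Set E}
    (hC : IsCompact C) : ∃ K, ∀ t ∈ s, LipschitzOnWith K (separatedField f g t) C := by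
  obtain ⟨M, hM⟩ := exists_sum_nnnorm_le_of_isCompact hs hf
  choose K hK using fun i =>
    ((hg i).locallyLipschitzOn (s := C)).exists_lipschitzOnWith_of_compact hC
  exact ⟨M * Finset.univ.sup K, fun t ht => lipschitzOnWith_separatedField (hM t ht)
    fun i => (hK i).weaken (Finset.le_sup (Finset.mem_univ i))⟩

theorem exists_mem_nhds_lipschitzOnWith_separatedField {s : Set ℝ} (hs : IsCompact s)
    (hf : ∀ i, ContinuousOn (f i) s) {x₀ : E}
    (hg : ∀ i, HasStrictFDerivAt (g i) (0 : E →L[ℝ] E) x₀) {K : ℝ≥0} (hK : 0 < K) :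
    ∃ U ∈ 𝓝 x₀, ∀ t ∈ s, LipschitzOnWith K (separatedField f g t) U := by
  obtain ⟨M, hM⟩ := exists_sum_nnnorm_le_of_isCompact hs hf
  choose U hU hlip using fun i =>
    (hg i).exists_lipschitzOnWith_of_nnnorm_lt (K / (M + 1)) (by rw [nnnorm_zero]; positivity)
  refine ⟨⋂ i, U i, Filter.iInter_mem.2 hU, fun t ht => ?_⟩
  have hconst : (M + 1) * (K / (M + 1)) = K := mul_div_cancel₀ K (by positivity)
  exact hconst ▸ lipschitzOnWith_separatedField ((hM t ht).trans le_self_add)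
    fun i => (hlip i).mono (iInter_subset U i)

theorem composition_condition_implies_center_general [CompleteSpace E] {F : ι → ℝ → ℝ}
    {w : ℝ → ℝ} {a b : ℝ} {x₀ : E} (hab : a < b) (hf : ∀ i, ContinuousOn (f i) (Icc a b))
    (hg : ∀ i, ContDiff ℝ 1 (g i)) (hg_zero : ∀ i, g i x₀ = 0)
    (hg_fderiv : ∀ i, fderiv ℝ (g i) x₀ = 0) (hF : ∀ i, ContDiff ℝ 1 (F i))
    (hw : DifferentiableOn ℝ w (Icc a b)) (hwab : w b = w a)
    (hfF : ∀ i, ∀ θ ∈ Icc a b, HasDerivWithinAt (F i ∘ w) (f i θ) (Icc a b) θ) :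
    ∃ ε > (0 : ℝ), ∀ y : ℝ → E, IsIntegralCurveOn y (separatedField f g) (Icc a b) →
      dist (y a) x₀ < ε → y b = y a := by
  have chain_rule : ∀ i, ∀ θ ∈ Icc a b,
      f i θ = derivWithin w (Icc a b) θ * deriv (F i) (w θ) := fun i θ hθ => by
    have hF_comp : HasDerivWithinAt (F i ∘ w) (derivWithin w (Icc a b) θ * deriv (F i) (w θ))
        (Icc a b) θ :=
      ((hF i).differentiable one_ne_zero (w θ)).hasDerivAt.scomp_hasDerivWithinAt θ
        (hw θ hθ).hasDerivWithinAt
    exact (uniqueDiffOn_Icc hab θ hθ).eq_deriv _ (hfF i θ hθ) hF_comp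
  have hF' : ∀ i, Continuous (deriv (F i)) := fun i => (hF i).continuous_deriv le_rfl
  have hg_strict : ∀ i, HasStrictFDerivAt (g i) (0 : E →L[ℝ] E) x₀ := fun i =>
    hg_fderiv i ▸ (hg i).contDiffAt.hasStrictFDerivAt one_ne_zero
  have himage : IsCompact (w '' Icc a b) := isCompact_Icc.image_of_continuousOn hw.continuousOn
  refine exists_forall_isIntegralCurveOn_eq_of_pullback
    (v := separatedField (fun i => deriv (F i)) g) hab.le hw hwab (fun θ hθ x => ?_)
    (fun C => exists_lipschitzOnWith_separatedField_of_isCompact isCompact_Icc hf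
      fun i => (hg i).locallyLipschitz)
    (fun K => exists_mem_nhds_lipschitzOnWith_separatedField himage
      (fun i => (hF' i).continuousOn) hg_strict)
    (fun x => ?_) (fun t _ => ?_)
  · simp only [separatedField, Finset.smul_sum, smul_smul, chain_rule _ θ hθ]
  · unfold separatedField
    fun_prop
  · simp only [separatedField, hg_zero, smul_zero, Finset.sum_const_zero]

end SeparatedField

/-- The composition condition implies that the Abel differential equation
`y' = l̂ y³ + m̂ y²` has a center: all solutions with small enough initial value
are `2π`-periodic over `[0, 2π]`. -/
theorem composition_condition_implies_center
    (lhat mhat : ℝ → ℝ) (hlhat : IsTrigPoly lhat) (hmhat : IsTrigPoly mhat)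
    (l m : ℝ → ℝ)
    (hl : ∀ θ : ℝ, l θ = ∫ s in (0:ℝ)..θ, lhat s)
    (hm : ∀ θ : ℝ, m θ = ∫ s in (0:ℝ)..θ, mhat s)
    (lt mt w : ℝ → ℝ)
    (hlt : ContDiff ℝ 1 lt) (hmt : ContDiff ℝ 1 mt) (hw : ContDiff ℝ 1 w)
    (hper : ∀ θ : ℝ, w (θ + 2 * Real.pi) = w θ)
    (hcl : ∀ θ : ℝ, l θ = lt (w θ))
    (hcm : ∀ θ : ℝ, m θ = mt (w θ)) :
    ∃ ε > (0:ℝ), ∀ y : ℝ → ℝ, Differentiable ℝ y →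
      (∀ θ ∈ Set.Icc (0:ℝ) (2 * Real.pi),
        deriv y θ = lhat θ * (y θ) ^ 3 + mhat θ * (y θ) ^ 2) →
      |y 0| < ε → y (2 * Real.pi) = y 0 := by
  have hl' : ∀ θ, HasDerivAt (lt ∘ w) (lhat θ) θ :=
    hasDerivAt_of_eq_integral hlhat.continuous fun θ => (hcl θ).symm.trans (hl θ)
  have hm' : ∀ θ, HasDerivAt (mt ∘ w) (mhat θ) θ :=
    hasDerivAt_of_eq_integral hmhat.continuous fun θ => (hcm θ).symm.trans (hm θ)
  obtain ⟨ε, hε, hcenter⟩ := composition_condition_implies_center_general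
    (f := ![lhat, mhat]) (g := ![fun x : ℝ => x ^ 3, fun x => x ^ 2]) (F := ![lt, mt]) (w := w)
    (x₀ := 0) Real.two_pi_pos
    (Fin.forall_fin_two.2 ⟨hlhat.continuous.continuousOn, hmhat.continuous.continuousOn⟩)
    (Fin.forall_fin_two.2 ⟨contDiff_id.pow 3, contDiff_id.pow 2⟩)
    (by simp [Fin.forall_fin_two]) (by simp [Fin.forall_fin_two, fderiv_fun_pow])
    (Fin.forall_fin_two.2 ⟨hlt, hmt⟩) (hw.differentiable one_ne_zero).differentiableOn
    (by simpa using hper 0)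
    (Fin.forall_fin_two.2
      ⟨fun θ _ => (hl' θ).hasDerivWithinAt, fun θ _ => (hm' θ).hasDerivWithinAt⟩)
  refine ⟨ε, hε, fun y hy hode hy0 => hcenter y (fun θ hθ => ?_) (by simpa using hy0)⟩
  simpa [separatedField, ← hode θ hθ] using (hy θ).hasDerivAt.hasDerivWithinAt
end

section
/- Let l and m be nonconstant trigonometric polynomials, and assume there exist continuous functions l̃, m̃, w : ℝ → ℝ with w 2π-periodic such that l(θ) = l̃(w(θ)) and m(θ) = m̃(w(θ)) for all θ. Then for every integer n ≥ 1 there do NOT exist two-variable real polynomials P, Q ∈ ℝ[X, Y] such that the function θ ↦ Q(l(θ), m(θ)) is not identically zero and tan(nθ/2)·Q(l(θ), m(θ)) = P(l(θ), m(θ)) for all θ ∈ ℝ with cos(nθ/2) ≠ 0. In other words, tan(nθ/2) cannot be expressed as a rational function u(l, m) of l and m with real coefficients. -/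
/-!
A continuous function `w : ℝ → ℝ` that is not injective has a local extremum `x` by Rolle's
argument, and is therefore not injective on any neighbourhood of `x`. Every function factoring
through `w` inherits these coincidences, whereas `θ ↦ tan (c * θ)`, viewed as the map
`θ ↦ [sin (c * θ) : cos (c * θ)]` to the projective line, is locally injective when `c ≠ 0`.
A quotient `p / q` of functions factoring through `w` thus cannot equal it; analyticity of `p` and
`q` handles the poles of the tangent and keeps the zeros of `q` away from the coincidences.
-/

open Filter Function Set Topology

theorem IsTrigPoly.analyticOnNhd {f : ℝ → ℝ} (hf : IsTrigPoly f) : AnalyticOnNhd ℝ f univ := by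
  induction hf using Algebra.adjoin_induction with
  | mem g hg =>
    rcases hg with rfl | rfl
    exacts [Real.analyticOnNhd_sin, Real.analyticOnNhd_cos]
  | algebraMap r => exact analyticOnNhd_const
  | add f g _ _ hf hg => exact hf.add hg
  | mul f g _ _ hf hg => exact hf.mul hg

section LocalInjectivity

variable {X Y : Type*} [ConditionallyCompleteLinearOrder X] [DenselyOrdered X] [TopologicalSpace X]
  [OrderTopology X] [NoMinOrder X] [NoMaxOrder X] [LinearOrder Y] [TopologicalSpace Y]

theorem not_injOn_of_isLocalExtr [OrderClosedTopology Y] {w : X → Y} (hw : Continuous w) {x : X}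
    (hextr : IsLocalExtr w x) {U : Set X} (hU : U ∈ 𝓝 x) : ¬ InjOn w U := by
  intro hinj
  obtain ⟨a, b, hx, hextr, hsub⟩ : ∃ a b, x ∈ Ioo a b ∧
      IsExtrOn w (Ioo a b) x ∧ Ioo a b ⊆ U := by
    rcases hextr with hmin | hmax
    · obtain ⟨a, b, hx, h⟩ := mem_nhds_iff_exists_Ioo_subset.1 (inter_mem hmin hU)
      exact ⟨a, b, hx, .inl fun y hy => (h hy).1, fun y hy => (h hy).2⟩
    · obtain ⟨a, b, hx, h⟩ := mem_nhds_iff_exists_Ioo_subset.1 (inter_mem hmax hU)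
      exact ⟨a, b, hx, .inr fun y hy => (h hy).1, fun y hy => (h hy).2⟩
  obtain ⟨y, hay, hyx⟩ := exists_between hx.1
  obtain ⟨z, hxz, hzb⟩ := exists_between hx.2
  have hy : y ∈ Ioo a b := ⟨hay, hyx.trans hx.2⟩
  have hz : z ∈ Ioo a b := ⟨hx.1.trans hxz, hzb⟩
  rcases hw.continuousOn.strictMonoOn_of_injOn_Ioo (hx.1.trans hx.2) (hinj.mono hsub) with
    hmono | hanti
  · rcases hextr with hmin | hmax
    · exact (hmono hy hx hyx).not_ge (hmin hy)
    · exact (hmono hx hz hxz).not_ge (hmax hz)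
  · rcases hextr with hmin | hmax
    · exact (hanti hx hz hxz).not_ge (hmin hz)
    · exact (hanti hy hx hyx).not_ge (hmax hy)

theorem exists_forall_nhds_not_injOn [OrderTopology Y] {w : X → Y} (hw : Continuous w)
    (hinj : ¬ Injective w) : ∃ x, ∀ U ∈ 𝓝 x, ¬ InjOn w U := by
  obtain ⟨a, b, hab, hne⟩ := not_injective_iff.1 hinj
  obtain ⟨x, -, hx⟩ := exists_isLocalExtr_uIoo hne hw.continuousOn hab
  exact ⟨x, fun U hU => not_injOn_of_isLocalExtr hw hx hU⟩

end LocalInjectivity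

theorem mul_eq_mul_of_div_mul_eq_of_ne_zero {𝕜 : Type*} [NontriviallyNormedField 𝕜] {U : Set 𝕜}
    {s d p q : 𝕜 → 𝕜} (hs : AnalyticOnNhd 𝕜 s U) (hd : AnalyticOnNhd 𝕜 d U)
    (hp : AnalyticOnNhd 𝕜 p U) (hq : AnalyticOnNhd 𝕜 q U) (hU : IsPreconnected U)
    (hd0 : ∃ z ∈ U, d z ≠ 0) (h : ∀ z ∈ U, d z ≠ 0 → s z / d z * q z = p z) :
    ∀ z ∈ U, s z * q z = d z * p z := by
  have hprod : ∀ z ∈ U, d z * (s z * q z - d z * p z) = 0 := by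
    intro z hz
    rcases eq_or_ne (d z) 0 with h0 | h0
    · rw [h0, zero_mul]
    · rw [← h z hz h0]
      field_simp
      ring
  rcases hd.eq_zero_or_eq_zero_of_mul_eq_zero ((hs.mul hq).sub (hd.mul hp)) hprod hU with h0 | h0
  · obtain ⟨z, hz, hdz⟩ := hd0
    exact absurd (h0 z hz) hdz
  · exact fun z hz => sub_eq_zero.1 (h0 z hz)

theorem sin_mul_eq_cos_mul_of_tan_mul_eq {c : ℝ} {p q : ℝ → ℝ} (hp : AnalyticOnNhd ℝ p univ)
    (hq : AnalyticOnNhd ℝ q univ)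
    (h : ∀ θ, Real.cos (c * θ) ≠ 0 → Real.tan (c * θ) * q θ = p θ) (θ : ℝ) :
    Real.sin (c * θ) * q θ = Real.cos (c * θ) * p θ := by
  have hlin : AnalyticOnNhd ℝ (fun θ => c * θ) univ := analyticOnNhd_const.mul analyticOnNhd_id
  exact mul_eq_mul_of_div_mul_eq_of_ne_zero
    (Real.analyticOnNhd_sin.comp hlin (mapsTo_univ _ _))
    (Real.analyticOnNhd_cos.comp hlin (mapsTo_univ _ _)) hp hq isPreconnected_univ
    ⟨0, trivial, by simp⟩
    (fun θ _ hθ => by simpa only [comp_apply, Real.tan_eq_sin_div_cos] using h θ hθ) θ trivial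

theorem eq_of_sin_mul_eq_cos_mul {x y p q : ℝ} (hq : q ≠ 0) (hxy : |x - y| < Real.pi)
    (hx : Real.sin x * q = Real.cos x * p) (hy : Real.sin y * q = Real.cos y * p) : x = y := by
  have hsin : Real.sin (x - y) = 0 := by
    refine (mul_eq_zero.1 ?_).resolve_right hq
    rw [Real.sin_sub]
    linear_combination Real.cos y * hx - Real.cos x * hy
  obtain ⟨hlo, hhi⟩ := abs_lt.1 hxy
  exact sub_eq_zero.1 ((Real.sin_eq_zero_iff_of_lt_of_lt hlo hhi).1 hsin)

theorem not_forall_tan_mul_eq_of_factorsThrough {Y : Type*} [LinearOrder Y] [TopologicalSpace Y]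
    [OrderTopology Y] {w : ℝ → Y} (hw : Continuous w) (hinj : ¬ Injective w) {p q : ℝ → ℝ}
    (hp : AnalyticOnNhd ℝ p univ) (hq : AnalyticOnNhd ℝ q univ) (hpw : p.FactorsThrough w)
    (hqw : q.FactorsThrough w) (hq0 : ¬ ∀ θ, q θ = 0) {c : ℝ} (hc : c ≠ 0) :
    ¬ ∀ θ, Real.cos (c * θ) ≠ 0 → Real.tan (c * θ) * q θ = p θ := by
  intro htan
  obtain ⟨x, hx⟩ := exists_forall_nhds_not_injOn hw hinj
  have hne : ∀ᶠ θ in 𝓝 x, θ ≠ x → q θ ≠ 0 := by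
    refine eventually_nhdsWithin_iff.1 (not_frequently.1 fun hfreq => hq0 fun θ => ?_)
    exact hq.eqOn_zero_of_preconnected_of_frequently_eq_zero isPreconnected_univ trivial
      hfreq trivial
  have hnear : ∀ᶠ θ in 𝓝 x, |c * θ - c * x| < Real.pi / 2 :=
    ContinuousAt.eventually_lt (by fun_prop) continuousAt_const (by simp [Real.pi_pos])
  refine hx _ (hne.and hnear) fun a ⟨hqa, ha⟩ b ⟨hqb, hb⟩ hab => by_contra fun hab' => ?_
  have hqa0 : q a ≠ 0 := by
    rcases eq_or_ne a x with rfl | hax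
    · exact hqw hab ▸ hqb (Ne.symm hab')
    · exact hqa hax
  have hdist : |c * a - c * b| < Real.pi := by
    rw [abs_sub_comm] at hb
    linarith [abs_sub_le (c * a) (c * x) (c * b)]
  have hclear := sin_mul_eq_cos_mul_of_tan_mul_eq hp hq htan
  exact hab' <| mul_left_cancel₀ hc <| eq_of_sin_mul_eq_cos_mul hqa0 hdist (hclear a) <| by
    rw [hpw hab, hqw hab]
    exact hclear b

theorem tan_not_rational_in_l_m_general {σ Y : Type*} [LinearOrder Y] [TopologicalSpace Y]
    [OrderTopology Y] {f : ℝ → σ → ℝ} (hf : ∀ i, AnalyticOnNhd ℝ (f · i) univ) {w : ℝ → Y}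
    (hw : Continuous w) (hinj : ¬ Injective w) (hfw : f.FactorsThrough w) {c : ℝ} (hc : c ≠ 0) :
    ¬ ∃ P Q : MvPolynomial σ ℝ,
      (¬ ∀ θ : ℝ, MvPolynomial.eval (f θ) Q = 0) ∧
      (∀ θ : ℝ, Real.cos (c * θ) ≠ 0 →
        Real.tan (c * θ) * MvPolynomial.eval (f θ) Q = MvPolynomial.eval (f θ) P) := by
  rintro ⟨P, Q, hQ, htan⟩
  exact not_forall_tan_mul_eq_of_factorsThrough hw hinj (.aeval_mvPolynomial hf P)
    (.aeval_mvPolynomial hf Q) (hfw.comp_left (MvPolynomial.eval · P))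
    (hfw.comp_left (MvPolynomial.eval · Q)) hQ hc htan

/-- If nonconstant trigonometric polynomials `l, m` satisfy the composition
condition, then `tan (nθ/2)` is not a rational function of `l` and `m`. -/
theorem tan_not_rational_in_l_m
    (l m : ℝ → ℝ) (hl : IsTrigPoly l) (hm : IsTrigPoly m)
    (hlnc : ¬ ∃ c : ℝ, ∀ θ : ℝ, l θ = c)
    (hmnc : ¬ ∃ c : ℝ, ∀ θ : ℝ, m θ = c)
    (lt mt w : ℝ → ℝ)
    (hlt : Continuous lt) (hmt : Continuous mt) (hwc : Continuous w)
    (hper : ∀ θ : ℝ, w (θ + 2 * Real.pi) = w θ)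
    (hcl : ∀ θ : ℝ, l θ = lt (w θ))
    (hcm : ∀ θ : ℝ, m θ = mt (w θ)) :
    ∀ n : ℕ, 1 ≤ n →
      ¬ ∃ P Q : MvPolynomial (Fin 2) ℝ,
        (¬ ∀ θ : ℝ, MvPolynomial.eval ![l θ, m θ] Q = 0) ∧
        (∀ θ : ℝ, Real.cos (n * θ / 2) ≠ 0 →
          Real.tan (n * θ / 2) * MvPolynomial.eval ![l θ, m θ] Q =
            MvPolynomial.eval ![l θ, m θ] P) := by
  intro n hn
  simpa only [mul_div_right_comm] using tan_not_rational_in_l_m_general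
    (f := fun θ => ![l θ, m θ]) (Fin.forall_fin_two.2 ⟨hl.analyticOnNhd, hm.analyticOnNhd⟩) hwc
    (fun hinj => Real.two_pi_pos.ne' (by simpa using hinj (hper 0)))
    (fun a b hab => by simp only [hcl, hcm, hab]) (c := n / 2) (by positivity)
end

section
/- Let w : ℝ → ℝ be a continuous 2π-periodic function (w(θ + 2π) = w(θ) for all θ) and let n ≥ 1 be an integer. Then there exist real numbers θ₁, θ₂ such that w(θ₁) = w(θ₂) but θ₁ − θ₂ is not an integer multiple of 2π/n. -/
/-!
A periodic continuous `w` has compact range, so it attains its maximum and its minimum. For any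
shift `a`, passing from `θ` to `a + θ` cannot increase `w` at a maximum nor decrease it at a
minimum, so by connectedness `w (a + θ) = w θ` has a solution `θ`. It suffices to choose `a` outside
the subgroup `(2π/n)ℤ`, which is proper since `ℝ` is not cyclic.
-/

section

variable {X α : Type*} [TopologicalSpace X] [PreconnectedSpace X]
  [LinearOrder α] [TopologicalSpace α] [OrderClosedTopology α]

theorem exists_apply_map_eq_of_isCompact_range [Nonempty X] {f : X → α} {g : X → X}
    (hf : Continuous f) (hg : Continuous g) (hrange : IsCompact (Set.range f)) :
    ∃ x, f (g x) = f x := by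
  obtain ⟨_, ⟨M, rfl⟩, hM⟩ := hrange.exists_isGreatest (Set.range_nonempty f)
  obtain ⟨_, ⟨m, rfl⟩, hm⟩ := hrange.exists_isLeast (Set.range_nonempty f)
  have hmax : f (g M) ≤ f M := hM (Set.mem_range_self _)
  have hmin : f m ≤ f (g m) := hm (Set.mem_range_self _)
  exact intermediate_value_univ₂ (hf.comp hg) hf hmax hmin

theorem exists_eq_value_not_multiple_general [AddGroup X] [SeparatelyContinuousAdd X] {w : X → α}
    (hw : Continuous w) (hrange : IsCompact (Set.range w)) {H : AddSubgroup X} (hH : H ≠ ⊤) :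
    ∃ θ₁ θ₂, w θ₁ = w θ₂ ∧ θ₁ - θ₂ ∉ H := by
  obtain ⟨a, ha⟩ : ∃ a, a ∉ H := by simpa [AddSubgroup.eq_top_iff'] using hH
  obtain ⟨θ, hθ⟩ := exists_apply_map_eq_of_isCompact_range hw (continuous_const_add a) hrange
  exact ⟨a + θ, θ, hθ, by rwa [add_sub_cancel_right]⟩

end

theorem zmultiples_ne_top_of_denselyOrdered {G : Type*} [AddCommGroup G] [LinearOrder G]
    [IsOrderedAddMonoid G] [DenselyOrdered G] [Nontrivial G] (d : G) :
    AddSubgroup.zmultiples d ≠ ⊤ := fun h =>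
  not_isAddCyclic_of_denselyOrdered G (isAddCyclic_iff_exists_zmultiples_eq_top.2 ⟨d, h⟩)

/-- A continuous `2π`-periodic function takes the same value at two points whose
difference is not an integer multiple of `2π/n`. -/
theorem exists_eq_value_not_multiple
    (w : ℝ → ℝ) (hw : Continuous w)
    (hper : ∀ θ : ℝ, w (θ + 2 * Real.pi) = w θ)
    (n : ℕ) (hn : 1 ≤ n) :
    ∃ θ₁ θ₂ : ℝ, w θ₁ = w θ₂ ∧ ¬ ∃ k : ℤ, θ₁ - θ₂ = k * (2 * Real.pi / n) := by
  have hrange := Function.Periodic.compact_of_continuous hper Real.two_pi_pos.ne' hw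
  simpa only [AddSubgroup.mem_zmultiples_iff, zsmul_eq_mul, eq_comm] using
    exists_eq_value_not_multiple_general hw hrange
      (zmultiples_ne_top_of_denselyOrdered (2 * Real.pi / n))
end

section
/- Let T denote the ℝ-algebra of trigonometric polynomials (an integral domain under pointwise operations). Then the field of fractions of T is isomorphic, as an ℝ-algebra, to the field ℝ(x) of rational functions in one variable over ℝ, via an isomorphism ψ sending sin θ ↦ 2x/(1 + x²) and cos θ ↦ (1 − x²)/(1 + x²). -/
/-- The ℝ-algebra of trigonometric polynomials: the ℝ-subalgebra of `ℝ → ℝ`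
generated by `sin` and `cos`. -/
noncomputable def TrigPolyAlg : Subalgebra ℝ (ℝ → ℝ) :=
  Algebra.adjoin ℝ ({Real.sin, Real.cos} : Set (ℝ → ℝ))

theorem sin_mem_trigPolyAlg : Real.sin ∈ TrigPolyAlg :=
  Algebra.subset_adjoin (Set.mem_insert _ _)

theorem cos_mem_trigPolyAlg : Real.cos ∈ TrigPolyAlg :=
  Algebra.subset_adjoin (Set.mem_insert_of_mem _ rfl)

/-!
The half-angle parameter `t = sin / (1 + cos)` recovers `sin = 2t / (1 + t²)` and
`cos = (1 - t²) / (1 + t²)` from `sin² + cos² = 1` alone, so `t` generates the field of fractions.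
If `t` were algebraic over `ℝ`, so would be `sin`; but a function with infinitely many values is
not annihilated by a nonzero polynomial. Hence the field of fractions is `ℝ(t)` with `t`
transcendental. That there is a field of fractions at all is the identity theorem for analytic
functions.
-/

open IntermediateField Set

section FunctionAlgebra

theorem transcendental_of_infinite_range {α R : Type*} [CommRing R] [IsDomain R] {f : α → R}
    (hf : (range f).Infinite) : Transcendental R f := by
  rw [transcendental_iff]
  intro p hp
  refine p.eq_zero_of_infinite_isRoot (hf.mono ?_)
  rintro _ ⟨x, rfl⟩
  rw [mem_ofPred_eq, Polynomial.IsRoot, ← Polynomial.coe_aeval_eq_eval,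
    ← Polynomial.aeval_fn_apply, hp, Pi.zero_apply]

variable {𝕜 B : Type*} [NontriviallyNormedField 𝕜] [NormedRing B] [NormedAlgebra 𝕜 B]

theorem analyticOnNhd_of_mem_adjoin {E : Type*} [NormedAddCommGroup E] [NormedSpace 𝕜 E]
    {S : Set (E → B)} {U : Set E} (hS : ∀ f ∈ S, AnalyticOnNhd 𝕜 f U) {f : E → B}
    (hf : f ∈ Algebra.adjoin 𝕜 S) : AnalyticOnNhd 𝕜 f U := by
  induction hf using Algebra.adjoin_induction with
  | mem f hf => exact hS f hf
  | algebraMap r => exact analyticOnNhd_const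
  | add f g _ _ hf hg => exact hf.add hg
  | mul f g _ _ hf hg => exact hf.mul hg

theorem isDomain_adjoin_of_analyticOnNhd [PreconnectedSpace 𝕜] [IsDomain B] {S : Set (𝕜 → B)}
    (hS : ∀ f ∈ S, AnalyticOnNhd 𝕜 f univ) : IsDomain (Algebra.adjoin 𝕜 S) := by
  have noZeroDivisors : NoZeroDivisors (Algebra.adjoin 𝕜 S) := by
    refine ⟨fun {f g} hfg => ?_⟩
    have mul_apply_eq_zero (z : 𝕜) : f.1 z * g.1 z = 0 := congrFun (congrArg Subtype.val hfg) z
    rcases (analyticOnNhd_of_mem_adjoin hS f.2).eq_zero_or_eq_zero_of_mul_eq_zero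
      (analyticOnNhd_of_mem_adjoin hS g.2) (fun z _ => mul_apply_eq_zero z)
      isPreconnected_univ with hf | hg
    · exact Or.inl (Subtype.ext (funext fun z => hf z (mem_univ z)))
    · exact Or.inr (Subtype.ext (funext fun z => hg z (mem_univ z)))
  exact NoZeroDivisors.to_isDomain _

end FunctionAlgebra

section HalfAngle

variable {F : Type*} [Field F] {s c : F}

/-- The tangent `s / (1 + c)` of half the angle with sine `s` and cosine `c`: the slope of the line
joining `(-1, 0)` to the point `(c, s)` of the unit circle, with junk value `0` at `c = -1`. -/
def tanHalfAngle (s c : F) : F :=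
  s / (1 + c)

theorem one_add_tanHalfAngle_sq (h : s ^ 2 + c ^ 2 = 1) (hc : 1 + c ≠ 0) :
    1 + tanHalfAngle s c ^ 2 = 2 / (1 + c) := by
  rw [tanHalfAngle]
  field_simp
  linear_combination h

theorem one_sub_tanHalfAngle_sq (h : s ^ 2 + c ^ 2 = 1) (hc : 1 + c ≠ 0) :
    1 - tanHalfAngle s c ^ 2 = 2 * c / (1 + c) := by
  rw [tanHalfAngle]
  field_simp
  linear_combination -h

section NeZeroTwo

variable [NeZero (2 : F)]

theorem two_mul_tanHalfAngle_div_one_add_sq (h : s ^ 2 + c ^ 2 = 1) (hc : 1 + c ≠ 0) :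
    2 * tanHalfAngle s c / (1 + tanHalfAngle s c ^ 2) = s := by
  rw [one_add_tanHalfAngle_sq h hc, tanHalfAngle]
  field_simp

theorem one_sub_tanHalfAngle_sq_div_one_add_sq (h : s ^ 2 + c ^ 2 = 1) (hc : 1 + c ≠ 0) :
    (1 - tanHalfAngle s c ^ 2) / (1 + tanHalfAngle s c ^ 2) = c := by
  rw [one_add_tanHalfAngle_sq h hc, one_sub_tanHalfAngle_sq h hc]
  field_simp

end NeZeroTwo

variable {K : Type*} [Field K] [Algebra K F]

theorem one_add_ne_zero_of_transcendental (h : s ^ 2 + c ^ 2 = 1) (hs : Transcendental K s) :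
    1 + c ≠ 0 := by
  intro hc
  have hs_sq : s ^ 2 = 0 := by linear_combination h + (1 - c) * hc
  exact hs (eq_zero_of_pow_eq_zero hs_sq ▸ isAlgebraic_zero)

variable [NeZero (2 : F)]

theorem adjoin_tanHalfAngle (h : s ^ 2 + c ^ 2 = 1) (hc : 1 + c ≠ 0) :
    K⟮tanHalfAngle s c⟯ = K⟮s, c⟯ := by
  have ht := mem_adjoin_simple_self K (tanHalfAngle s c)
  have ht_sq := pow_mem ht 2
  have hs_mem : s ∈ K⟮tanHalfAngle s c⟯ := by
    have := div_mem (mul_mem (ofNat_mem _ 2) ht) (add_mem (one_mem _) ht_sq)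
    rwa [two_mul_tanHalfAngle_div_one_add_sq h hc] at this
  have hc_mem : c ∈ K⟮tanHalfAngle s c⟯ := by
    have := div_mem (sub_mem (one_mem _) ht_sq) (add_mem (one_mem _) ht_sq)
    rwa [one_sub_tanHalfAngle_sq_div_one_add_sq h hc] at this
  refine le_antisymm (adjoin_simple_le_iff.2 ?_) (adjoin_le_iff.2 (pair_subset hs_mem hc_mem))
  exact div_mem (mem_adjoin_pair_left K s c) (add_mem (one_mem _) (mem_adjoin_pair_right K s c))

theorem transcendental_tanHalfAngle (h : s ^ 2 + c ^ 2 = 1) (hs : Transcendental K s) :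
    Transcendental K (tanHalfAngle s c) := by
  intro ht
  have hle : K⟮tanHalfAngle s c⟯ ≤ algebraicClosure K F :=
    adjoin_simple_le_iff.2 (mem_algebraicClosure_iff'.2 ht.isIntegral)
  rw [adjoin_tanHalfAngle h (one_add_ne_zero_of_transcendental h hs)] at hle
  exact hs (mem_algebraicClosure_iff.1 (hle (mem_adjoin_pair_left K s c)))

theorem exists_algEquiv_ratFunc_of_adjoin_pair_eq_top (h : s ^ 2 + c ^ 2 = 1)
    (hs : Transcendental K s) (htop : K⟮s, c⟯ = ⊤) :
    ∃ ψ : F ≃ₐ[K] RatFunc K,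
      ψ s = 2 * RatFunc.X / (1 + RatFunc.X ^ 2) ∧
      ψ c = (1 - RatFunc.X ^ 2) / (1 + RatFunc.X ^ 2) := by
  have hc := one_add_ne_zero_of_transcendental h hs
  have ht := transcendental_tanHalfAngle h hs
  let φ : RatFunc K ≃ₐ[K] F := (RatFunc.algEquivOfTranscendental _ ht).trans <|
    (equivOfEq ((adjoin_tanHalfAngle h hc).trans htop)).trans topEquiv
  have hφ : φ RatFunc.X = tanHalfAngle s c := RatFunc.algEquivOfTranscendental_X _ ht
  refine ⟨φ.symm, φ.symm_apply_eq.2 ?_, φ.symm_apply_eq.2 ?_⟩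
  · simp [hφ, map_ofNat φ 2, two_mul_tanHalfAngle_div_one_add_sq h hc]
  · simp [hφ, one_sub_tanHalfAngle_sq_div_one_add_sq h hc]

end HalfAngle

section FractionField

variable {K A F : Type*} [Field K] [CommRing A] [Field F] [Algebra K A] [Algebra A F]
  [Algebra K F] [IsScalarTower K A F] [IsFractionRing A F]

theorem intermediateField_adjoin_image_algebraMap_eq_top {S : Set A} (hS : Algebra.adjoin K S = ⊤) :
    adjoin K (algebraMap A F '' S) = ⊤ := by
  have algebraMap_mem (a : A) : algebraMap A F a ∈ adjoin K (algebraMap A F '' S) := by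
    have ha : algebraMap A F a ∈ (Algebra.adjoin K S).map (IsScalarTower.toAlgHom K A F) :=
      ⟨a, hS ▸ Algebra.mem_top, rfl⟩
    rw [AlgHom.map_adjoin] at ha
    exact algebra_adjoin_le_adjoin K _ ha
  refine eq_top_iff.2 fun x _ => ?_
  obtain ⟨a, b, -, rfl⟩ := IsFractionRing.div_surjective (A := A) x
  exact div_mem (algebraMap_mem a) (algebraMap_mem b)

theorem fractionRing_trigPoly_equiv_ratFunc_general [NeZero (2 : K)] {s c : A}
    (h : s ^ 2 + c ^ 2 = 1) (hs : Transcendental K s) (htop : Algebra.adjoin K {s, c} = ⊤) :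
    ∃ ψ : F ≃ₐ[K] RatFunc K,
      ψ (algebraMap A F s) = 2 * RatFunc.X / (1 + RatFunc.X ^ 2) ∧
      ψ (algebraMap A F c) = (1 - RatFunc.X ^ 2) / (1 + RatFunc.X ^ 2) := by
  have : NeZero (2 : F) := NeZero.nat_of_injective (n := 2) (algebraMap K F).injective
  have hF : algebraMap A F s ^ 2 + algebraMap A F c ^ 2 = 1 := by
    simpa using congrArg (algebraMap A F) h
  have hsF : Transcendental K (algebraMap A F s) :=
    (transcendental_algebraMap_iff (IsFractionRing.injective A F)).2 hs
  have htopF : K⟮algebraMap A F s, algebraMap A F c⟯ = ⊤ := by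
    simpa only [image_pair] using intermediateField_adjoin_image_algebraMap_eq_top (F := F) htop
  exact exists_algEquiv_ratFunc_of_adjoin_pair_eq_top hF hsF htopF

end FractionField

section TrigPolyAlg

instance : IsDomain TrigPolyAlg := by
  refine isDomain_adjoin_of_analyticOnNhd ?_
  rintro _ (rfl | rfl)
  exacts [Real.analyticOnNhd_sin, Real.analyticOnNhd_cos]

theorem transcendental_sin : Transcendental ℝ (⟨Real.sin, sin_mem_trigPolyAlg⟩ : TrigPolyAlg) :=
  (transcendental_algebraMap_iff (A := ℝ → ℝ) Subtype.val_injective).1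
    (transcendental_of_infinite_range Real.range_sin_infinite)

theorem adjoin_sin_cos_eq_top :
    Algebra.adjoin ℝ {(⟨Real.sin, sin_mem_trigPolyAlg⟩ : TrigPolyAlg),
      ⟨Real.cos, cos_mem_trigPolyAlg⟩} = ⊤ := by
  have hpair : {(⟨Real.sin, sin_mem_trigPolyAlg⟩ : TrigPolyAlg), ⟨Real.cos, cos_mem_trigPolyAlg⟩} =
      Subtype.val ⁻¹' {Real.sin, Real.cos} := by
    ext f
    simp [Subtype.ext_iff]
  rw [hpair]
  exact Algebra.adjoin_adjoin_coe_preimage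

end TrigPolyAlg

/-- The field of fractions of the ring of trigonometric polynomials is
ℝ-algebra isomorphic to the field `ℝ(x)` of rational functions, via `ψ` with
`ψ(sin θ) = 2x/(1+x²)` and `ψ(cos θ) = (1-x²)/(1+x²)`. -/
theorem fractionRing_trigPoly_equiv_ratFunc :
    ∃ ψ : FractionRing TrigPolyAlg ≃ₐ[ℝ] RatFunc ℝ,
      ψ (algebraMap TrigPolyAlg (FractionRing TrigPolyAlg)
          ⟨Real.sin, sin_mem_trigPolyAlg⟩) =
        2 * RatFunc.X / (1 + RatFunc.X ^ 2) ∧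
      ψ (algebraMap TrigPolyAlg (FractionRing TrigPolyAlg)
          ⟨Real.cos, cos_mem_trigPolyAlg⟩) =
        (1 - RatFunc.X ^ 2) / (1 + RatFunc.X ^ 2) :=
  fractionRing_trigPoly_equiv_ratFunc_general
    (Subtype.ext <| funext Real.sin_sq_add_cos_sq) transcendental_sin adjoin_sin_cos_eq_top
end
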